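/- arXiv:2304.04900 — 3 statements merged into one kernel-verified Lean document; each statement's English description precedes it below -/
import Mathlib

section
/- There exists an absolute constant C > 0 such that for every finite set P of N points in the real plane ℝ² and every finite set L of M lines in ℝ², the number of incidences, i.e. pairs (p, ℓ) ∈ P × L with p ∈ ℓ, is at most C·(N^{2/3}·M^{2/3} + N + M). -/
/-!
The proof is Székely's: a crossing-number bound for a geometric graph built from the incidences.

After a shear the points of `P` have distinct abscissae. Join two points of `P` by an edge when they
are consecutive on a line of `L`. A line carrying `j ≥ 1` points contributes `j - 1` edges, so the
number of incidences is at most `#E + #L` (`incidences_le`). Two edges cross only where their lines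
meet, so there are at most `#L ^ 2` ordered crossing pairs (`crossings_le`).

A straight-line graph without crossings has at most `3 * #V` edges (`planar_card_le`). This is shown
without Euler's formula, by charging every edge to a vertex in one of three ways: the edge is the
highest one leaving its left endpoint to the right, or the highest one arriving at its right
endpoint from the left, or the first edge met when descending vertically from some vertex
(`exists_vertex_above`). Each vertex is charged at most once in each way. Deleting one edge per
crossing gives `#E ≤ 3 * #V + #X` for graphs with a set `X` of crossings.

Applying this to a random set of vertices, each vertex being kept with probability `1 / k`, yields
`#E ≤ 3 * k * #V + #X / k ^ 2` (`amplify`); the choice `k ≈ (#L ^ 2 / #P) ^ (1 / 3)` concludes.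
-/

/-- A line in `ℝ²` is an affine line, i.e. a set of the form
`{(x, y) : a·x + b·y = c}` with `(a, b) ≠ (0, 0)`. -/
def IsLine (L : Set (ℝ × ℝ)) : Prop :=
  ∃ a b c : ℝ, (a, b) ≠ (0, 0) ∧ L = {p : ℝ × ℝ | a * p.1 + b * p.2 = c}

/-! ### Random vertex sets -/

open Classical in
/-- Random vertex sets by counting: colour `V` uniformly with `k` colours and keep the vertices
of colour `0`. A set of `j` vertices survives in a proportion `1 / k ^ j` of the colourings. -/
lemma card_colorings {α : Type*} (V T : Finset α) (hT : T ⊆ V) (k : ℕ) [NeZero k] :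
    ((Finset.univ.filter (fun c : V → Fin k => ∀ t : V, t.1 ∈ T → c t = 0)).card : ℝ)
      = (k : ℝ) ^ V.card / (k : ℝ) ^ T.card := by
  have hk : (k : ℝ) ≠ 0 := by exact_mod_cast NeZero.ne k
  have h1 : (Finset.univ.filter (fun c : V → Fin k => ∀ t : V, t.1 ∈ T → c t = 0))
      = Fintype.piFinset (fun t : V => if t.1 ∈ T then ({0} : Finset (Fin k)) else Finset.univ) := by
    ext c
    simp only [Finset.mem_filter, Finset.mem_univ, true_and, Fintype.mem_piFinset]
    refine forall_congr' fun t => ?_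
    by_cases h : t.1 ∈ T <;> simp [h]
  rw [h1, Fintype.card_piFinset, eq_div_iff (pow_ne_zero _ hk)]
  have h2 : ∀ t : V, (if t.1 ∈ T then ({0} : Finset (Fin k)) else Finset.univ).card
      = if t.1 ∈ T then 1 else k := by
    intro t; split_ifs <;> simp
  simp only [h2]
  have h3 : ∏ t : V, (if t.1 ∈ T then 1 else k) = ∏ t ∈ V, (if t ∈ T then 1 else k) :=
    Finset.prod_coe_sort V (fun t => if t ∈ T then 1 else k)
  have h4 : (∏ t ∈ V, (if t ∈ T then 1 else k)) * k ^ T.card = k ^ V.card := by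
    rw [Finset.prod_ite, Finset.prod_const_one, one_mul, Finset.prod_const, ← pow_add]
    congr 1
    rw [← Finset.sdiff_eq_filter, Finset.card_sdiff_add_card_eq_card hT]
  rw [h3]
  exact_mod_cast h4

lemma rescale {k K e v x : ℝ} (hk : 0 < k) (hK : 0 < K)
    (h : e * (K / k ^ 2) ≤ 3 * (v * (K / k ^ 1)) + x * (K / k ^ 4)) :
    e ≤ 3 * v * k + x / k ^ 2 := by
  have e2 : 3 * (v * (K / k ^ 1)) + x * (K / k ^ 4) = (3 * v * k + x / k ^ 2) * (K / k ^ 2) := by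
    have : k ≠ 0 := hk.ne'
    field_simp
  rw [e2] at h
  exact le_of_mul_le_mul_right h (by positivity)

/-- The amplification step of the crossing lemma, by taking expectations over random vertex sets. -/
lemma amplify {α : Type*} [DecidableEq α] (V : Finset α) (E : Finset (α × α))
    (X : Finset ((α × α) × (α × α)))
    (hE : ∀ e ∈ E, e.1 ∈ V ∧ e.2 ∈ V ∧ e.1 ≠ e.2)
    (hX : ∀ z ∈ X, z.1.1 ∈ V ∧ z.1.2 ∈ V ∧ z.2.1 ∈ V ∧ z.2.2 ∈ V ∧
      ({z.1.1, z.1.2, z.2.1, z.2.2} : Finset α).card = 4)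
    (hS : ∀ S ⊆ V, (E.filter (fun e => e.1 ∈ S ∧ e.2 ∈ S)).card ≤ 3 * S.card +
      (X.filter (fun z => z.1.1 ∈ S ∧ z.1.2 ∈ S ∧ z.2.1 ∈ S ∧ z.2.2 ∈ S)).card)
    (k : ℕ) [NeZero k] :
    (E.card : ℝ) ≤ 3 * V.card * k + X.card / (k : ℝ) ^ 2 := by
  classical
  have hk : (0 : ℝ) < k := by exact_mod_cast NeZero.pos k
  let S : (V → Fin k) → Finset α := fun c => V.filter (fun v => ∃ h : v ∈ V, c ⟨v, h⟩ = 0)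
  have hmem : ∀ c v, v ∈ S c ↔ ∃ h : v ∈ V, c ⟨v, h⟩ = 0 := by
    intro c v
    simp only [S, Finset.mem_filter]
    exact ⟨fun h => h.2, fun h => ⟨h.1, h⟩⟩
  have key : ∀ T ⊆ V, ((Finset.univ.filter (fun c : V → Fin k => T ⊆ S c)).card : ℝ)
      = (k : ℝ) ^ V.card / (k : ℝ) ^ T.card := by
    intro T hT
    rw [← card_colorings V T hT k]
    congr 2
    ext c
    simp only [Finset.mem_filter, Finset.mem_univ, true_and, Finset.subset_iff, hmem]
    exact ⟨fun h t ht => (h ht).2, fun h t ht => ⟨hT ht, h ⟨t, hT ht⟩ ht⟩⟩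
  -- double counting, for a family of sets `T b` of common size `j`
  have swap : ∀ {β : Type _} (B : Finset β) (T : β → Finset α) (j : ℕ),
      (∀ b ∈ B, T b ⊆ V ∧ (T b).card = j) →
      ∑ c : V → Fin k, ((B.filter (fun b => T b ⊆ S c)).card : ℝ)
        = B.card * ((k : ℝ) ^ V.card / (k : ℝ) ^ j) := by
    intro β B T j hB
    have : ∑ c : V → Fin k, ((B.filter (fun b => T b ⊆ S c)).card : ℝ)
        = ∑ b ∈ B, ((Finset.univ.filter (fun c : V → Fin k => T b ⊆ S c)).card : ℝ) := by
      simp only [Finset.card_filter, Nat.cast_sum]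
      exact Finset.sum_comm
    rw [this, Finset.sum_congr rfl (fun b hb => by rw [key _ (hB b hb).1, (hB b hb).2]),
      Finset.sum_const, nsmul_eq_mul]
  have sE := swap E (fun e => {e.1, e.2}) 2 (fun e he => by
    obtain ⟨h1, h2, h3⟩ := hE e he
    exact ⟨by simp [Finset.insert_subset_iff, h1, h2], Finset.card_pair h3⟩)
  have sV := swap V (fun v => {v}) 1 (fun v hv => by simp [hv])
  have sX := swap X (fun z => {z.1.1, z.1.2, z.2.1, z.2.2}) 4 (fun z hz => by
    obtain ⟨h1, h2, h3, h4, h5⟩ := hX z hz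
    exact ⟨by simp [Finset.insert_subset_iff, h1, h2, h3, h4], h5⟩)
  have hsum : ∑ c : V → Fin k, ((E.filter (fun e => ({e.1, e.2} : Finset α) ⊆ S c)).card : ℝ)
      ≤ ∑ c : V → Fin k, (3 * ((V.filter (fun v => ({v} : Finset α) ⊆ S c)).card : ℝ) +
        ((X.filter (fun z => ({z.1.1, z.1.2, z.2.1, z.2.2} : Finset α) ⊆ S c)).card : ℝ)) := by
    refine Finset.sum_le_sum fun c _ => ?_
    have h := hS (S c) (Finset.filter_subset _ _)
    have hV : V.filter (fun v => ({v} : Finset α) ⊆ S c) = S c := by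
      ext v
      simp only [Finset.mem_filter, Finset.singleton_subset_iff, hmem]
      exact ⟨fun h => h.2, fun h => ⟨h.1, h⟩⟩
    rw [hV]
    simp only [Finset.insert_subset_iff, Finset.singleton_subset_iff]
    exact_mod_cast h
  rw [Finset.sum_add_distrib, ← Finset.mul_sum, sE, sV, sX] at hsum
  have hn : (0 : ℝ) < (k : ℝ) ^ V.card := pow_pos hk _
  generalize (k : ℝ) ^ V.card = K at hsum hn
  exact rescale hk hn hsum

/-! ### Straight-line graphs without crossings -/

/-- Slope of the segment from `e.1` to `e.2`; meaningful when `e.1.1 ≠ e.2.1`. -/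
noncomputable def slp (e : (ℝ × ℝ) × (ℝ × ℝ)) : ℝ := (e.2.2 - e.1.2) / (e.2.1 - e.1.1)

/-- Ordinate at abscissa `x` of the line through the two endpoints of `e`. -/
noncomputable def ht (e : (ℝ × ℝ) × (ℝ × ℝ)) (x : ℝ) : ℝ := e.1.2 + slp e * (x - e.1.1)

lemma ht_left (e : (ℝ × ℝ) × (ℝ × ℝ)) : ht e e.1.1 = e.1.2 := by simp [ht]

lemma ht_right {e : (ℝ × ℝ) × (ℝ × ℝ)} (h : e.1.1 < e.2.1) : ht e e.2.1 = e.2.2 := by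
  have : e.2.1 - e.1.1 ≠ 0 := by linarith
  simp only [ht, slp]; field_simp; ring

lemma ht_eq_right {e : (ℝ × ℝ) × (ℝ × ℝ)} (h : e.1.1 < e.2.1) (x : ℝ) :
    ht e x = e.2.2 - slp e * (e.2.1 - x) := by
  have := ht_right h
  simp only [ht] at *; linarith

/-- If the lines of `e` and `f` do not meet above the open interval `(u, v)`, their vertical order
is weakly constant on `[u, v]`. -/
lemma ht_le_of_lt {e f : (ℝ × ℝ) × (ℝ × ℝ)} {u v x x' : ℝ}
    (h : ∀ z, u < z → z < v → ht e z ≠ ht f z)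
    (hx : u ≤ x ∧ x ≤ v) (hx' : u ≤ x' ∧ x' ≤ v) (hlt : ht e x < ht f x) :
    ht e x' ≤ ht f x' := by
  by_contra! hc
  set D : ℝ → ℝ := fun z => ht f z - ht e z with hD
  have hcont : Continuous D := by
    simp only [hD, ht]; fun_prop
  have h0 : (0 : ℝ) ∈ Set.uIcc (D x) (D x') := by
    rw [Set.mem_uIcc]; right; simp only [hD]; constructor <;> linarith
  obtain ⟨z, hz, hz0⟩ := intermediate_value_uIcc (hcont.continuousOn) h0
  have hzx : z ≠ x := by rintro rfl; simp only [hD] at hz0; linarith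
  have hzx' : z ≠ x' := by rintro rfl; simp only [hD] at hz0; linarith
  have hez : ht e z = ht f z := by simp only [hD] at hz0; linarith
  rw [Set.mem_uIcc] at hz
  rcases hz with ⟨h1, h2⟩ | ⟨h1, h2⟩
  · exact h z (by linarith [lt_of_le_of_ne h1 hzx.symm]) (by linarith [lt_of_le_of_ne h2 hzx']) hez
  · exact h z (by linarith [lt_of_le_of_ne h1 hzx'.symm]) (by linarith [lt_of_le_of_ne h2 hzx]) hez

/-- A straight-line graph: finitely many edges, directed from left to right, on vertices of distinct
abscissae, such that no edge passes through a vertex in its interior. Edges may cross. -/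
structure GeomGraph (V : Finset (ℝ × ℝ)) (E : Finset ((ℝ × ℝ) × (ℝ × ℝ))) : Prop where
  inj : ∀ p ∈ V, ∀ q ∈ V, p.1 = q.1 → p = q
  left : ∀ e ∈ E, e.1 ∈ V
  right : ∀ e ∈ E, e.2 ∈ V
  lt : ∀ e ∈ E, e.1.1 < e.2.1
  vert : ∀ e ∈ E, ∀ v ∈ V, e.1.1 < v.1 → v.1 < e.2.1 → ht e v.1 ≠ v.2

/-- The relative interiors of the (left-to-right) segments `e` and `f` meet. -/
def Cross (e f : (ℝ × ℝ) × (ℝ × ℝ)) : Prop :=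
  ∃ x, e.1.1 < x ∧ x < e.2.1 ∧ f.1.1 < x ∧ x < f.2.1 ∧ ht e x = ht f x

open Classical in
/-- An edge `e` with an edge above it at its left endpoint (`f`) and one at its right endpoint
(`g`) is the first edge below some vertex. Taking `f` lowest possible, the leftmost vertex in the
region above `e` and weakly below `f` has this property. -/
lemma exists_vertex_above {V : Finset (ℝ × ℝ)} {E : Finset ((ℝ × ℝ) × (ℝ × ℝ))}
    (G : GeomGraph V E) (hX : ∀ e ∈ E, ∀ f ∈ E, e ≠ f → ¬ Cross e f)
    {e : (ℝ × ℝ) × (ℝ × ℝ)} (he : e ∈ E)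
    (hf : ∃ f ∈ E, f.1 = e.1 ∧ slp e < slp f) (hg : ∃ g ∈ E, g.2 = e.2 ∧ slp g < slp e) :
    ∃ v ∈ V, e.1.1 < v.1 ∧ v.1 < e.2.1 ∧ ht e v.1 < v.2 ∧
      ∀ h ∈ E, h.1.1 < v.1 → v.1 < h.2.1 → ht h v.1 < v.2 → ht h v.1 ≤ ht e v.1 := by
  have hne : (E.filter (fun f => f.1 = e.1 ∧ slp e < slp f)).Nonempty := by
    obtain ⟨f, h1, h2⟩ := hf
    exact ⟨f, by simp [h1, h2]⟩
  obtain ⟨f, hfm, hfmin⟩ := Finset.exists_min_image _ slp hne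
  simp only [Finset.mem_filter] at hfm hfmin
  obtain ⟨hfE, hfe, hfs⟩ := hfm
  obtain ⟨g, hgE, hge, hgs⟩ := hg
  have elt := G.lt e he
  have flt := G.lt f hfE
  have glt := G.lt g hgE
  have hfa : ht f e.1.1 = e.1.2 := by rw [← hfe]; exact ht_left f
  -- `f` lies above `e` to the right of the common left endpoint
  have hef : ∀ x, e.1.1 < x → ht e x < ht f x := by
    intro x hx
    simp only [ht, hfe]
    nlinarith
  have heg : ∀ x, x < e.2.1 → ht e x < ht g x := by
    intro x hx
    rw [ht_eq_right elt, ht_eq_right glt, hge]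
    nlinarith
  -- weak constancy of the vertical order of two edges on their common range
  have sgn : ∀ p ∈ E, ∀ q ∈ E, ∀ x x', ht p x < ht q x →
      p.1.1 ≤ x → x ≤ p.2.1 → q.1.1 ≤ x → x ≤ q.2.1 →
      p.1.1 ≤ x' → x' ≤ p.2.1 → q.1.1 ≤ x' → x' ≤ q.2.1 → ht p x' ≤ ht q x' := by
    intro p hp q hq x x' hlt h1 h2 h3 h4 h5 h6 h7 h8
    have hpq : p ≠ q := by rintro rfl; exact lt_irrefl _ hlt
    refine ht_le_of_lt (u := max p.1.1 q.1.1) (v := min p.2.1 q.2.1) ?_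
      ⟨max_le h1 h3, le_min h2 h4⟩ ⟨max_le h5 h7, le_min h6 h8⟩ hlt
    intro z hz hz' heq
    rw [max_lt_iff] at hz
    rw [lt_min_iff] at hz'
    exact hX p hp q hq hpq ⟨z, hz.1, hz'.1, hz.2, hz'.2, heq⟩
  set W := V.filter (fun v => e.1.1 < v.1 ∧ v.1 < e.2.1 ∧ v.1 ≤ f.2.1 ∧
    ht e v.1 < v.2 ∧ v.2 ≤ ht f v.1) with hW
  have hWne : W.Nonempty := by
    rcases lt_trichotomy f.2.1 e.2.1 with hc | hc | hc
    · refine ⟨f.2, ?_⟩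
      have h1 : e.1.1 < f.2.1 := by rw [← hfe]; exact flt
      have h2 := hef _ h1
      rw [ht_right flt] at h2
      simp only [hW, Finset.mem_filter]
      exact ⟨G.right f hfE, h1, hc, le_rfl, h2, (ht_right flt).ge⟩
    · exfalso
      have h2 := G.inj _ (G.right f hfE) _ (G.right e he) hc
      have : f = e := Prod.ext hfe h2
      rw [this] at hfs
      exact lt_irrefl _ hfs
    · have hgb : ht g e.2.1 = e.2.2 := by rw [← hge]; exact ht_right glt
      have hfb : ht g e.2.1 < ht f e.2.1 := by
        have := hef _ elt
        rw [ht_right elt] at this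
        rw [hgb]; exact this
      have hge1 : g.2.1 = e.2.1 := by rw [hge]
      have hfe1 : f.1.1 = e.1.1 := by rw [hfe]
      rcases lt_trichotomy g.1.1 e.1.1 with hd | hd | hd
      · exfalso
        have h1 := heg _ elt
        have h2 := sgn g hgE f hfE e.2.1 e.1.1 hfb (by linarith) (by linarith) (by linarith)
          (by linarith) (by linarith) (by linarith) (by linarith) (by linarith)
        rw [hfa] at h2
        rw [ht_left] at h1
        linarith
      · exfalso
        have h2 := G.inj _ (G.left g hgE) _ (G.left e he) hd
        have : g = e := Prod.ext h2 hge
        rw [this] at hgs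
        exact lt_irrefl _ hgs
      · have hgl : g.1.1 < e.2.1 := by linarith
        have h1 := heg _ hgl
        have h2 := sgn g hgE f hfE e.2.1 g.1.1 hfb (by linarith) (by linarith) (by linarith)
          (by linarith) (by linarith) (by linarith) (by linarith) (by linarith)
        rw [ht_left] at h1 h2
        refine ⟨g.1, ?_⟩
        simp only [hW, Finset.mem_filter]
        exact ⟨G.left g hgE, hd, hgl, by linarith, h1, h2⟩
  obtain ⟨v, hvW, hvmin⟩ := Finset.exists_min_image W (fun v => v.1) hWne
  have hvW' := hvW
  simp only [hW, Finset.mem_filter] at hvW'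
  obtain ⟨hvV, hv1, hv2, hv3, hv4, hv5⟩ := hvW'
  refine ⟨v, hvV, hv1, hv2, hv4, ?_⟩
  intro h hhE hh1 hh2 hh3
  by_contra! hcon
  have hhf : ht h v.1 < ht f v.1 := lt_of_lt_of_le hh3 hv5
  have hfe1 : f.1.1 = e.1.1 := by rw [hfe]
  rcases lt_trichotomy h.1.1 e.1.1 with hd | hd | hd
  · -- `h` is squeezed between `e` and `f` at their common endpoint
    have h1 := sgn h hhE f hfE v.1 e.1.1 hhf (by linarith) (by linarith) (by linarith)
      (by linarith) (by linarith) (by linarith) (by linarith) (by linarith)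
    have h2 := sgn e he h hhE v.1 e.1.1 hcon (by linarith) (by linarith) (by linarith)
      (by linarith) (by linarith) (by linarith) (by linarith) (by linarith)
    rw [hfa] at h1
    rw [ht_left] at h2
    exact G.vert h hhE e.1 (G.left e he) hd (by linarith) (le_antisymm h1 h2)
  · -- `h` starts at the same vertex, contradicting the minimality of the slope of `f`
    have h2 := G.inj _ (G.left h hhE) _ (G.left e he) hd
    have hs1 : slp e < slp h := by
      by_contra! hcc
      simp only [ht, h2] at hcon
      nlinarith
    have hs2 := hfmin h ⟨hhE, h2, hs1⟩
    simp only [ht, h2, hfe] at hhf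
    nlinarith
  · -- the left endpoint of `h` is a vertex of the region further to the left
    have h1 := sgn h hhE f hfE v.1 h.1.1 hhf (by linarith) (by linarith) (by linarith)
      (by linarith) (by linarith) (by linarith) (by linarith) (by linarith)
    have h2 := sgn e he h hhE v.1 h.1.1 hcon (by linarith) (by linarith) (by linarith)
      (by linarith) (by linarith) (by linarith) (by linarith) (by linarith)
    rw [ht_left] at h1 h2
    have h3 := G.vert e he h.1 (G.left h hhE) hd (by linarith)
    have : h.1 ∈ W := by
      simp only [hW, Finset.mem_filter]
      exact ⟨G.left h hhE, hd, by linarith, by linarith, lt_of_le_of_ne h2 h3, h1⟩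
    have := hvmin _ this
    linarith

lemma slp_ht_left {e f : (ℝ × ℝ) × (ℝ × ℝ)} (h1 : e.1 = f.1) (hs : slp e = slp f) (x : ℝ) :
    ht e x = ht f x := by simp only [ht, h1, hs]

open Classical in
/-- A straight-line graph without crossings has at most `3 * #V` edges, each edge being charged to
a vertex in one of three injective ways. -/
lemma planar_card_le {V : Finset (ℝ × ℝ)} {E : Finset ((ℝ × ℝ) × (ℝ × ℝ))}
    (G : GeomGraph V E) (hX : ∀ e ∈ E, ∀ f ∈ E, e ≠ f → ¬ Cross e f) :
    E.card ≤ 3 * V.card := by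
  set E1 := E.filter (fun e => ∀ f ∈ E, f.1 = e.1 → slp f ≤ slp e) with hE1
  set E2 := E.filter (fun e => ∀ f ∈ E, f.2 = e.2 → slp e ≤ slp f) with hE2
  set E3 := E.filter (fun e => ∃ v ∈ V, e.1.1 < v.1 ∧ v.1 < e.2.1 ∧ ht e v.1 < v.2 ∧
      ∀ h ∈ E, h.1.1 < v.1 → v.1 < h.2.1 → ht h v.1 < v.2 → ht h v.1 ≤ ht e v.1) with hE3
  have hcover : E ⊆ E1 ∪ E2 ∪ E3 := by
    intro e he
    simp only [hE1, hE2, hE3, Finset.mem_union, Finset.mem_filter, he, true_and]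
    by_contra! hc
    obtain ⟨⟨h1, h2⟩, h3⟩ := hc
    obtain ⟨v, hv⟩ := exists_vertex_above G hX he h1 h2
    obtain ⟨h, hh⟩ := h3 v hv.1 hv.2.1 hv.2.2.1 hv.2.2.2.1
    exact absurd (hv.2.2.2.2 h hh.1 hh.2.1 hh.2.2.1 hh.2.2.2.1) (not_le.2 hh.2.2.2.2)
  have c1 : E1.card ≤ V.card := by
    refine Finset.card_le_card_of_injOn Prod.fst ?_ ?_
    · intro e he
      exact G.left e (Finset.mem_filter.1 he).1
    · intro e he f hf hef
      obtain ⟨he, he'⟩ := Finset.mem_filter.1 he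
      obtain ⟨hf, hf'⟩ := Finset.mem_filter.1 hf
      have hs := le_antisymm (hf' e he hef) (he' f hf hef.symm)
      by_contra hne
      have a := G.lt e he
      have b := G.lt f hf
      have c : e.1.1 = f.1.1 := congrArg Prod.fst hef
      obtain ⟨x, hx1, hx2⟩ := exists_between (lt_min a (c ▸ b : e.1.1 < f.2.1))
      rw [lt_min_iff] at hx2
      exact hX e he f hf hne ⟨x, hx1, hx2.1, c ▸ hx1, hx2.2, slp_ht_left hef hs x⟩
  have c2 : E2.card ≤ V.card := by
    refine Finset.card_le_card_of_injOn Prod.snd ?_ ?_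
    · intro e he
      exact G.right e (Finset.mem_filter.1 he).1
    · intro e he f hf hef
      obtain ⟨he, he'⟩ := Finset.mem_filter.1 he
      obtain ⟨hf, hf'⟩ := Finset.mem_filter.1 hf
      have hs := le_antisymm (he' f hf hef.symm) (hf' e he hef)
      by_contra hne
      have a := G.lt e he
      have b := G.lt f hf
      have c : e.2.1 = f.2.1 := by rw [show e.2 = f.2 from hef]
      obtain ⟨x, hx1, hx2⟩ := exists_between (max_lt a (c ▸ b : f.1.1 < e.2.1))
      rw [max_lt_iff] at hx1
      refine hX e he f hf hne ⟨x, hx1.1, hx2, hx1.2, c ▸ hx2, ?_⟩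
      rw [ht_eq_right a, ht_eq_right b, hs, show e.2 = f.2 from hef]
  have c3 : E3.card ≤ V.card := by
    have hch : ∀ e : (ℝ × ℝ) × (ℝ × ℝ), ∃ v : ℝ × ℝ, e ∈ E3 → (v ∈ V ∧ e.1.1 < v.1 ∧
        v.1 < e.2.1 ∧ ht e v.1 < v.2 ∧
        ∀ h ∈ E, h.1.1 < v.1 → v.1 < h.2.1 → ht h v.1 < v.2 → ht h v.1 ≤ ht e v.1) := by
      intro e
      by_cases he : e ∈ E3
      · obtain ⟨v, hv⟩ := (Finset.mem_filter.1 he).2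
        exact ⟨v, fun _ => hv⟩
      · exact ⟨0, fun h => absurd h he⟩
    choose φ hφ using hch
    refine Finset.card_le_card_of_injOn φ (fun e he => (hφ e he).1) ?_
    intro e he f hf hef
    obtain ⟨-, a1, a2, a3, a4⟩ := hφ e he
    obtain ⟨-, b1, b2, b3, b4⟩ := hφ f hf
    rw [← hef] at b1 b2 b3 b4
    have he := (Finset.mem_filter.1 he).1
    have hf := (Finset.mem_filter.1 hf).1
    by_contra hne
    exact hX e he f hf hne ⟨_, a1, a2, b1, b2,
      le_antisymm (b4 e he a1 a2 a3) (a4 f hf b1 b2 b3)⟩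
  have := Finset.card_le_card hcover
  have := Finset.card_union_le (E1 ∪ E2) E3
  have := Finset.card_union_le E1 E2
  omega

open Classical in
/-- The set of ordered pairs of distinct crossing edges. -/
noncomputable def crossings (E : Finset ((ℝ × ℝ) × (ℝ × ℝ))) :
    Finset (((ℝ × ℝ) × (ℝ × ℝ)) × ((ℝ × ℝ) × (ℝ × ℝ))) :=
  (E ×ˢ E).filter (fun z => z.1 ≠ z.2 ∧ Cross z.1 z.2)

open Classical in
/-- Weak crossing lemma, obtained by deleting the first edge of each crossing pair. -/
lemma card_le_add_crossings {V : Finset (ℝ × ℝ)} {E : Finset ((ℝ × ℝ) × (ℝ × ℝ))}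
    (G : GeomGraph V E) : E.card ≤ 3 * V.card + (crossings E).card := by
  set E' := E \ (crossings E).image Prod.fst with hE'
  have hsub : ∀ e ∈ E', e ∈ E := fun e he => (Finset.mem_sdiff.1 he).1
  have G' : GeomGraph V E' :=
    ⟨G.inj, fun e he => G.left e (hsub e he), fun e he => G.right e (hsub e he),
      fun e he => G.lt e (hsub e he), fun e he => G.vert e (hsub e he)⟩
  have h1 := planar_card_le G' (by
    intro e he f hf hne hc
    refine (Finset.mem_sdiff.1 he).2 (Finset.mem_image.2 ⟨(e, f), ?_, rfl⟩)
    simp only [crossings, Finset.mem_filter, Finset.mem_product]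
    exact ⟨⟨hsub e he, hsub f hf⟩, hne, hc⟩)
  have h2 : E.card - ((crossings E).image Prod.fst).card ≤ E'.card := Finset.le_card_sdiff _ _
  have h3 : ((crossings E).image Prod.fst).card ≤ (crossings E).card := Finset.card_image_le
  omega

/-! ### The graph of consecutive points -/

/-- `e` joins two points of `P` on `l`, the left one first, with no point of `P` on `l` between. -/
def Consec (P : Finset (ℝ × ℝ)) (l : Set (ℝ × ℝ)) (e : (ℝ × ℝ) × (ℝ × ℝ)) : Prop :=
  e.1 ∈ P ∧ e.2 ∈ P ∧ e.1.1 < e.2.1 ∧ e.1 ∈ l ∧ e.2 ∈ l ∧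
    ∀ r ∈ P, r ∈ l → e.1.1 < r.1 → r.1 < e.2.1 → False

open Classical in
/-- The edges joining consecutive points of `P` on the lines of `L`. -/
noncomputable def edges (P : Finset (ℝ × ℝ)) (L : Finset (Set (ℝ × ℝ))) :
    Finset ((ℝ × ℝ) × (ℝ × ℝ)) :=
  (P ×ˢ P).filter (fun e => ∃ l ∈ L, Consec P l e)

lemma mem_edges {P : Finset (ℝ × ℝ)} {L : Finset (Set (ℝ × ℝ))} {e : (ℝ × ℝ) × (ℝ × ℝ)} :
    e ∈ edges P L ↔ ∃ l ∈ L, Consec P l e := by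
  simp only [edges, Finset.mem_filter, Finset.mem_product]
  exact ⟨fun h => h.2, fun h => ⟨by obtain ⟨l, -, h1, h2, -⟩ := h; exact ⟨h1, h2⟩, h⟩⟩

/-- The only property of lines that is used: `l` is determined by any two of its points with
distinct abscissae, as the graph of the affine function through them. -/
def LineLike (l : Set (ℝ × ℝ)) : Prop :=
  ∀ e : (ℝ × ℝ) × (ℝ × ℝ), e.1 ∈ l → e.2 ∈ l → e.1.1 < e.2.1 → ∀ v : ℝ × ℝ, v ∈ l ↔ v.2 = ht e v.1

lemma LineLike.unique {l m : Set (ℝ × ℝ)} (hl : LineLike l) (hm : LineLike m) {p q : ℝ × ℝ}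
    (hpl : p ∈ l) (hql : q ∈ l) (hpm : p ∈ m) (hqm : q ∈ m) (hne : p.1 ≠ q.1) : l = m := by
  rcases lt_or_gt_of_ne hne with h | h
  · ext v
    rw [hl (p, q) hpl hql h, hm (p, q) hpm hqm h]
  · ext v
    rw [hl (q, p) hql hpl h, hm (q, p) hqm hpm h]

lemma Consec.eq_of_overlap {P : Finset (ℝ × ℝ)} {l : Set (ℝ × ℝ)} {e f : (ℝ × ℝ) × (ℝ × ℝ)}
    (inj : ∀ p ∈ P, ∀ q ∈ P, p.1 = q.1 → p = q) (he : Consec P l e) (hf : Consec P l f)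
    {x : ℝ} (h1 : e.1.1 < x) (h2 : x < e.2.1) (h3 : f.1.1 < x) (h4 : x < f.2.1) : e = f := by
  obtain ⟨a1, a2, a3, a4, a5, a6⟩ := he
  obtain ⟨b1, b2, b3, b4, b5, b6⟩ := hf
  refine Prod.ext (inj _ a1 _ b1 ?_) (inj _ a2 _ b2 ?_)
  · rcases lt_trichotomy e.1.1 f.1.1 with h | h | h
    · exact (a6 _ b1 b4 h (by linarith)).elim
    · exact h
    · exact (b6 _ a1 a4 h (by linarith)).elim
  · rcases lt_trichotomy e.2.1 f.2.1 with h | h | h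
    · exact (b6 _ a2 a5 (by linarith) h).elim
    · exact h
    · exact (a6 _ b2 b5 (by linarith) h).elim

lemma geomGraph_edges {P : Finset (ℝ × ℝ)} {L : Finset (Set (ℝ × ℝ))}
    (inj : ∀ p ∈ P, ∀ q ∈ P, p.1 = q.1 → p = q) (hL : ∀ l ∈ L, LineLike l) :
    GeomGraph P (edges P L) where
  inj := inj
  left := fun e he => by obtain ⟨l, -, h⟩ := mem_edges.1 he; exact h.1
  right := fun e he => by obtain ⟨l, -, h⟩ := mem_edges.1 he; exact h.2.1
  lt := fun e he => by obtain ⟨l, -, h⟩ := mem_edges.1 he; exact h.2.2.1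
  vert := by
    intro e he v hv h1 h2 h3
    obtain ⟨l, hl, -, -, a3, a4, a5, a6⟩ := mem_edges.1 he
    exact a6 v hv ((hL l hl e a4 a5 a3 v).2 h3.symm) h1 h2

/-- Overlapping edges of the same line coincide, so crossing edges lie on distinct lines. -/
lemma crossing_lines_ne {P : Finset (ℝ × ℝ)} {l m : Set (ℝ × ℝ)} {e f : (ℝ × ℝ) × (ℝ × ℝ)}
    (inj : ∀ p ∈ P, ∀ q ∈ P, p.1 = q.1 → p = q) (he : Consec P l e) (hf : Consec P m f)
    (hne : e ≠ f) (hc : Cross e f) : l ≠ m := by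
  rintro rfl
  obtain ⟨x, h1, h2, h3, h4, -⟩ := hc
  exact hne (he.eq_of_overlap inj hf h1 h2 h3 h4)

/-- Crossing edges share no endpoint: their lines would meet both there and at the crossing. -/
lemma crossing_card_eq_four {P : Finset (ℝ × ℝ)} {l m : Set (ℝ × ℝ)} {e f : (ℝ × ℝ) × (ℝ × ℝ)}
    (inj : ∀ p ∈ P, ∀ q ∈ P, p.1 = q.1 → p = q) (hl : LineLike l) (hm : LineLike m)
    (he : Consec P l e) (hf : Consec P m f) (hne : e ≠ f) (hc : Cross e f) :
    ({e.1, e.2, f.1, f.2} : Finset (ℝ × ℝ)).card = 4 := by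
  have hlm := crossing_lines_ne inj he hf hne hc
  obtain ⟨x, h1, h2, h3, h4, h5⟩ := hc
  obtain ⟨-, -, a3, a4, a5, -⟩ := he
  obtain ⟨-, -, b3, b4, b5, -⟩ := hf
  have zl : (x, ht e x) ∈ l := (hl e a4 a5 a3 _).2 rfl
  have zm : (x, ht e x) ∈ m := (hm f b4 b5 b3 _).2 h5
  have n1 : e.1 ≠ e.2 := fun h => by rw [h] at a3; exact lt_irrefl _ a3
  have n2 : f.1 ≠ f.2 := fun h => by rw [h] at b3; exact lt_irrefl _ b3
  have n3 : e.1 ≠ f.2 := fun h => by rw [h] at h1; linarith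
  have n4 : e.2 ≠ f.1 := fun h => by rw [h] at h2; linarith
  have n5 : e.1 ≠ f.1 := fun h => hlm (hl.unique hm a4 zl (h ▸ b4) zm h1.ne)
  have n6 : e.2 ≠ f.2 := fun h => hlm (hl.unique hm a5 zl (h ▸ b5) zm h2.ne')
  rw [Finset.card_insert_of_notMem, Finset.card_insert_of_notMem, Finset.card_pair n2]
  · simp [n4, n6]
  · simp [n1, n3, n5]

/-- Each ordered pair of lines carries at most one ordered pair of crossing edges. -/
lemma crossings_le {P : Finset (ℝ × ℝ)} {L : Finset (Set (ℝ × ℝ))}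
    (inj : ∀ p ∈ P, ∀ q ∈ P, p.1 = q.1 → p = q) (hL : ∀ l ∈ L, LineLike l) :
    (crossings (edges P L)).card ≤ L.card ^ 2 := by
  have hch : ∀ e : (ℝ × ℝ) × (ℝ × ℝ), ∃ l, e ∈ edges P L → l ∈ L ∧ Consec P l e := by
    intro e
    by_cases he : e ∈ edges P L
    · obtain ⟨l, hl⟩ := mem_edges.1 he
      exact ⟨l, fun _ => hl⟩
    · exact ⟨∅, fun h => absurd h he⟩
  choose φ hφ using hch
  rw [sq, ← Finset.card_product]
  refine Finset.card_le_card_of_injOn (fun z => (φ z.1, φ z.2)) ?_ ?_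
  · intro z hz
    simp only [crossings, Finset.coe_filter, Finset.mem_product, Set.mem_ofPred_eq] at hz
    simp only [Finset.coe_product, Set.mem_prod, Finset.mem_coe]
    exact ⟨(hφ _ hz.1.1).1, (hφ _ hz.1.2).1⟩
  · rintro ⟨e, f⟩ hz ⟨e', f'⟩ hz' heq
    simp only [crossings, Finset.coe_filter, Finset.mem_product, Set.mem_ofPred_eq] at hz hz'
    simp only [Prod.mk.injEq] at heq
    obtain ⟨⟨he, hf⟩, hne, hc⟩ := hz
    obtain ⟨⟨he', hf'⟩, hne', hc'⟩ := hz'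
    obtain ⟨hl, ce⟩ := hφ e he
    obtain ⟨hm, cf⟩ := hφ f hf
    obtain ⟨-, ce'⟩ := hφ e' he'
    obtain ⟨-, cf'⟩ := hφ f' hf'
    rw [← heq.1] at ce'
    rw [← heq.2] at cf'
    have hlm := crossing_lines_ne inj ce cf hne hc
    obtain ⟨x, h1, h2, h3, h4, h5⟩ := hc
    obtain ⟨x', h1', h2', h3', h4', h5'⟩ := hc'
    have on : ∀ {l g}, l ∈ L → Consec P l g → ∀ y, (y, ht g y) ∈ l := fun {l g} hl hg y =>
      (hL l hl g hg.2.2.2.1 hg.2.2.2.2.1 hg.2.2.1 _).2 rfl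
    have hxx : x = x' := by
      by_contra hxx
      exact hlm ((hL _ hl).unique (hL _ hm) (on hl ce x) (on hl ce' x')
        (h5 ▸ on hm cf x) (h5' ▸ on hm cf' x') hxx)
    subst hxx
    rw [Prod.mk.injEq]
    exact ⟨ce.eq_of_overlap inj ce' h1 h2 h1' h2', cf.eq_of_overlap inj cf' h3 h4 h3' h4'⟩

open Classical in
/-- An incidence `(p, l)` is charged to `l` if `p` is the last point of `P` on `l`, and otherwise to
the edge from `p` to the next point of `P` on `l`. -/
lemma incidences_le {P : Finset (ℝ × ℝ)} {L : Finset (Set (ℝ × ℝ))}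
    (inj : ∀ p ∈ P, ∀ q ∈ P, p.1 = q.1 → p = q) (hL : ∀ l ∈ L, LineLike l) :
    ((P ×ˢ L).filter (fun z => z.1 ∈ z.2)).card ≤ (edges P L).card + L.card := by
  set I := (P ×ˢ L).filter (fun z => z.1 ∈ z.2) with hI
  set Q : (ℝ × ℝ) × Set (ℝ × ℝ) → Prop := fun z => ∃ r ∈ P, r ∈ z.2 ∧ z.1.1 < r.1 with hQ
  rw [← Finset.card_filter_add_card_filter_not (s := I) Q]
  refine Nat.add_le_add ?_ ?_
  · have hch : ∀ z : (ℝ × ℝ) × Set (ℝ × ℝ), ∃ q : ℝ × ℝ, z ∈ I.filter Q → Consec P z.2 (z.1, q) := by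
      intro z
      by_cases hz : z ∈ I.filter Q
      · simp only [hI, hQ, Finset.mem_filter, Finset.mem_product] at hz
        obtain ⟨⟨⟨h1, h2⟩, h3⟩, r, hr1, hr2, hr3⟩ := hz
        obtain ⟨q, hq, hqmin⟩ := Finset.exists_min_image
          (P.filter (fun r => r ∈ z.2 ∧ z.1.1 < r.1)) (fun r => r.1)
          ⟨r, by simp [hr1, hr2, hr3]⟩
        simp only [Finset.mem_filter] at hq hqmin
        refine ⟨q, fun _ => ⟨h1, hq.1, hq.2.2, h3, hq.2.1, ?_⟩⟩
        intro s hs hsl hs1 hs2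
        exact absurd (hqmin s ⟨hs, hsl, hs1⟩) (not_le.2 hs2)
      · exact ⟨0, fun h => absurd h hz⟩
    choose φ hφ using hch
    have hzL : ∀ z ∈ I.filter Q, z.2 ∈ L := by
      intro z hz
      simp only [hI, Finset.mem_filter, Finset.mem_product] at hz
      exact hz.1.1.2
    refine Finset.card_le_card_of_injOn (fun z => (z.1, φ z)) ?_ ?_
    · intro z hz
      exact mem_edges.2 ⟨z.2, hzL z hz, hφ z hz⟩
    · intro z hz w hw hzw
      simp only [Prod.mk.injEq] at hzw
      obtain ⟨-, -, a3, a4, a5, -⟩ := hφ z hz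
      obtain ⟨-, -, b3, b4, b5, -⟩ := hφ w hw
      rw [← hzw.1] at b4
      rw [← hzw.2] at b5
      exact Prod.ext hzw.1 ((hL _ (hzL z hz)).unique (hL _ (hzL w hw)) a4 a5 b4 b5 a3.ne)
  · refine Finset.card_le_card_of_injOn Prod.snd ?_ ?_
    · intro z hz
      simp only [hI, Finset.coe_filter, Finset.mem_filter, Finset.mem_product,
        Set.mem_ofPred_eq] at hz
      exact hz.1.1.2
    · rintro ⟨p, l⟩ hz ⟨q, m⟩ hw hlm
      simp only [hI, hQ, Finset.coe_filter, Finset.mem_filter, Finset.mem_product,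
        Set.mem_ofPred_eq] at hz hw
      obtain rfl : l = m := hlm
      obtain ⟨⟨⟨a1, a2⟩, a3⟩, a4⟩ := hz
      obtain ⟨⟨⟨b1, b2⟩, b3⟩, b4⟩ := hw
      push Not at a4 b4
      rw [inj p a1 q b1 (le_antisymm (b4 p a1 a3) (a4 q b1 b3))]

/-- The crossing inequality for the graph of consecutive points, for every sampling rate `1 / k`. -/
lemma edges_le {P : Finset (ℝ × ℝ)} {L : Finset (Set (ℝ × ℝ))}
    (inj : ∀ p ∈ P, ∀ q ∈ P, p.1 = q.1 → p = q) (hL : ∀ l ∈ L, LineLike l) (k : ℕ) [NeZero k] :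
    ((edges P L).card : ℝ) ≤ 3 * P.card * k + (L.card : ℝ) ^ 2 / (k : ℝ) ^ 2 := by
  have G := geomGraph_edges inj hL
  have h := amplify P (edges P L) (crossings (edges P L))
    (fun e he => ⟨G.left e he, G.right e he, fun h => by
      have := G.lt e he
      rw [h] at this
      exact lt_irrefl _ this⟩) ?_ ?_ k
  · refine h.trans ?_
    have : ((crossings (edges P L)).card : ℝ) ≤ (L.card : ℝ) ^ 2 := by
      exact_mod_cast crossings_le inj hL
    gcongr
  · rintro ⟨e, f⟩ hz
    simp only [crossings, Finset.mem_filter, Finset.mem_product] at hz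
    obtain ⟨⟨he, hf⟩, hne, hc⟩ := hz
    obtain ⟨l, hl, ce⟩ := mem_edges.1 he
    obtain ⟨m, hm, cf⟩ := mem_edges.1 hf
    exact ⟨ce.1, ce.2.1, cf.1, cf.2.1,
      crossing_card_eq_four inj (hL l hl) (hL m hm) ce cf hne hc⟩
  · intro S hS
    set E' := (edges P L).filter (fun e => e.1 ∈ S ∧ e.2 ∈ S) with hE'
    have hsub : ∀ e ∈ E', e ∈ edges P L := fun e he => (Finset.mem_filter.1 he).1
    have G' : GeomGraph S E' :=
      ⟨fun p hp q hq => inj p (hS hp) q (hS hq), fun e he => (Finset.mem_filter.1 he).2.1,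
        fun e he => (Finset.mem_filter.1 he).2.2, fun e he => G.lt e (hsub e he),
        fun e he v hv => G.vert e (hsub e he) v (hS hv)⟩
    refine (card_le_add_crossings G').trans (Nat.add_le_add_left (Finset.card_le_card ?_) _)
    intro z hz
    simp only [crossings, hE', Finset.mem_filter, Finset.mem_product] at hz ⊢
    tauto

/-- Optimisation of the sampling rate. -/
lemma optimise {e : ℝ} {N M : ℕ} (hN : 0 < N) (hM : 0 < M)
    (h : ∀ k : ℕ, 0 < k → e ≤ 3 * N * k + (M : ℝ) ^ 2 / (k : ℝ) ^ 2) :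
    e ≤ 4 * ((N : ℝ) ^ ((2 : ℝ) / 3) * (M : ℝ) ^ ((2 : ℝ) / 3)) + 3 * N := by
  have hN' : (0 : ℝ) < N := by exact_mod_cast hN
  have hM' : (0 : ℝ) < M := by exact_mod_cast hM
  obtain ⟨u, hu, hu3, hu2⟩ : ∃ u : ℝ, 0 < u ∧ (N : ℝ) = u ^ 3 ∧ (N : ℝ) ^ ((2 : ℝ) / 3) = u ^ 2 := by
    refine ⟨(N : ℝ) ^ ((1 : ℝ) / 3), by positivity, ?_, ?_⟩
    · rw [← Real.rpow_natCast, ← Real.rpow_mul hN'.le]; norm_num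
    · rw [← Real.rpow_natCast, ← Real.rpow_mul hN'.le]; norm_num
  obtain ⟨w, hw, hw3, hw2⟩ : ∃ u : ℝ, 0 < u ∧ (M : ℝ) = u ^ 3 ∧ (M : ℝ) ^ ((2 : ℝ) / 3) = u ^ 2 := by
    refine ⟨(M : ℝ) ^ ((1 : ℝ) / 3), by positivity, ?_, ?_⟩
    · rw [← Real.rpow_natCast, ← Real.rpow_mul hM'.le]; norm_num
    · rw [← Real.rpow_natCast, ← Real.rpow_mul hM'.le]; norm_num
  have ht : 0 < w ^ 2 / u := by positivity
  have hk := h ⌈w ^ 2 / u⌉₊ (Nat.ceil_pos.2 ht)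
  have k1 : w ^ 2 / u ≤ (⌈w ^ 2 / u⌉₊ : ℝ) := Nat.le_ceil _
  have k2 : (⌈w ^ 2 / u⌉₊ : ℝ) ≤ w ^ 2 / u + 1 := (Nat.ceil_lt_add_one ht.le).le
  rw [hu2, hw2]
  rw [hu3, hw3] at hk
  rw [hu3]
  have b1 : 3 * u ^ 3 * (⌈w ^ 2 / u⌉₊ : ℝ) ≤ 3 * u ^ 3 * (w ^ 2 / u + 1) := by gcongr
  have b2 : (w ^ 3) ^ 2 / (⌈w ^ 2 / u⌉₊ : ℝ) ^ 2 ≤ (w ^ 3) ^ 2 / (w ^ 2 / u) ^ 2 := by gcongr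
  have b3 : 3 * u ^ 3 * (w ^ 2 / u + 1) = 3 * (u ^ 2 * w ^ 2) + 3 * u ^ 3 := by field_simp
  have b4 : (w ^ 3) ^ 2 / (w ^ 2 / u) ^ 2 = u ^ 2 * w ^ 2 := by field_simp
  linarith

open Classical in
/-- The incidence bound for points of distinct abscissae. -/
lemma incidences_bound {P : Finset (ℝ × ℝ)} {L : Finset (Set (ℝ × ℝ))}
    (inj : ∀ p ∈ P, ∀ q ∈ P, p.1 = q.1 → p = q) (hL : ∀ l ∈ L, LineLike l) :
    (((P ×ˢ L).filter (fun z => z.1 ∈ z.2)).card : ℝ) ≤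
      4 * ((P.card : ℝ) ^ ((2 : ℝ) / 3) * (L.card : ℝ) ^ ((2 : ℝ) / 3)
        + (P.card : ℝ) + (L.card : ℝ)) := by
  rcases P.eq_empty_or_nonempty with rfl | hP
  · simp only [Finset.empty_product, Finset.filter_empty, Finset.card_empty, Nat.cast_zero]
    positivity
  rcases L.eq_empty_or_nonempty with rfl | hLn
  · simp only [Finset.product_empty, Finset.filter_empty, Finset.card_empty, Nat.cast_zero]
    positivity
  have h1 : (((P ×ˢ L).filter (fun z => z.1 ∈ z.2)).card : ℝ) ≤ (edges P L).card + L.card := by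
    exact_mod_cast incidences_le inj hL
  have h2 := optimise (e := (edges P L).card) hP.card_pos hLn.card_pos
    (fun k hk => haveI : NeZero k := ⟨hk.ne'⟩; edges_le inj hL k)
  have h3 : (0 : ℝ) ≤ P.card := by positivity
  have h4 : (0 : ℝ) ≤ L.card := by positivity
  linarith

/-! ### Reduction to distinct abscissae -/

/-- The horizontal shear `(x, y) ↦ (x + t * y, y)`. -/
def shear (t : ℝ) (p : ℝ × ℝ) : ℝ × ℝ := (p.1 + t * p.2, p.2)

lemma shear_injective (t : ℝ) : Function.Injective (shear t) := by
  rintro ⟨a, b⟩ ⟨c, d⟩ h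
  simp only [shear, Prod.mk.injEq] at h
  obtain ⟨h1, rfl⟩ := h
  simpa using h1

lemma exists_generic_shear (P : Finset (ℝ × ℝ)) :
    ∃ t : ℝ, ∀ p ∈ P, ∀ q ∈ P, (shear t p).1 = (shear t q).1 → p = q := by
  classical
  obtain ⟨t, ht⟩ := Infinite.exists_notMem_finset
    ((P ×ˢ P).image (fun z => (z.1.1 - z.2.1) / (z.2.2 - z.1.2)))
  refine ⟨t, fun p hp q hq h => ?_⟩
  simp only [shear] at h
  by_cases h2 : q.2 - p.2 = 0
  · have h3 : p.2 = q.2 := by linarith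
    rw [h3] at h
    exact Prod.ext (by linarith) h3
  · refine absurd (Finset.mem_image.2 ⟨(p, q), Finset.mem_product.2 ⟨hp, hq⟩, ?_⟩) ht
    rw [div_eq_iff h2]
    simp only
    linarith

lemma IsLine.shear {l : Set (ℝ × ℝ)} (hl : IsLine l) (t : ℝ) : IsLine (shear t '' l) := by
  obtain ⟨a, b, c, hab, rfl⟩ := hl
  refine ⟨a, b - t * a, c, ?_, ?_⟩
  · intro h
    simp only [Prod.mk.injEq] at h
    obtain ⟨rfl, h2⟩ := h
    exact hab (by simpa using h2)
  · ext ⟨x, y⟩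
    simp only [Set.mem_image, Set.mem_ofPred_eq, _root_.shear, Prod.mk.injEq]
    constructor
    · rintro ⟨⟨x', y'⟩, h, rfl, rfl⟩
      simp only at h ⊢
      linarith
    · intro h
      exact ⟨(x - t * y, y), by simp only; linarith, by simp, rfl⟩

lemma IsLine.lineLike {l : Set (ℝ × ℝ)} (hl : IsLine l) : LineLike l := by
  obtain ⟨a, b, c, hab, rfl⟩ := hl
  intro e h1 h2 h3 v
  simp only [Set.mem_ofPred_eq] at *
  have hd : e.2.1 - e.1.1 ≠ 0 := by linarith
  have hb : b ≠ 0 := by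
    rintro rfl
    have : a * (e.2.1 - e.1.1) = 0 := by linarith
    rcases mul_eq_zero.1 this with h | h
    · exact hab (by rw [h])
    · exact hd h
  have hs : b * slp e = -a := by
    simp only [slp]
    field_simp
    linarith
  have hht : b * ht e v.1 = c - a * v.1 := by
    simp only [ht]
    linear_combination h1 + (v.1 - e.1.1) * hs
  constructor
  · intro h
    exact mul_left_cancel₀ hb (by linarith)
  · intro h
    rw [h, hht]
    ring

/-- **Szemerédi–Trotter theorem.** There is an absolute constant `C > 0` such that for
every finite set `P` of points and every finite set `L` of lines in the plane, the number
of incidences (pairs `(p, ℓ) ∈ P × L` with `p ∈ ℓ`) is at most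
`C·(|P|^{2/3}·|L|^{2/3} + |P| + |L|)`. -/
theorem szemeredi_trotter :
    ∃ C : ℝ, 0 < C ∧
      ∀ (P : Finset (ℝ × ℝ)) (L : Finset (Set (ℝ × ℝ))),
        (∀ l ∈ L, IsLine l) →
        (({q : (ℝ × ℝ) × Set (ℝ × ℝ) | q.1 ∈ P ∧ q.2 ∈ L ∧ q.1 ∈ q.2}.ncard : ℝ) ≤
          C * ((P.card : ℝ) ^ ((2 : ℝ) / 3) * (L.card : ℝ) ^ ((2 : ℝ) / 3)
            + (P.card : ℝ) + (L.card : ℝ))) := by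
  classical
  refine ⟨4, by norm_num, fun P L hL => ?_⟩
  obtain ⟨t, ht⟩ := exists_generic_shear P
  have himg : Function.Injective (fun l : Set (ℝ × ℝ) => shear t '' l) :=
    (shear_injective t).image_injective
  have key := incidences_bound (P := P.image (shear t)) (L := L.image (fun l => shear t '' l))
    (by
      intro p hp q hq h
      obtain ⟨p, hp', rfl⟩ := Finset.mem_image.1 hp
      obtain ⟨q, hq', rfl⟩ := Finset.mem_image.1 hq
      rw [ht p hp' q hq' h])
    (by
      intro l hl
      obtain ⟨l, hl', rfl⟩ := Finset.mem_image.1 hl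
      exact ((hL l hl').shear t).lineLike)
  rw [Finset.card_image_of_injective _ (shear_injective t),
    Finset.card_image_of_injective _ himg] at key
  refine le_trans ?_ key
  have hset : {q : (ℝ × ℝ) × Set (ℝ × ℝ) | q.1 ∈ P ∧ q.2 ∈ L ∧ q.1 ∈ q.2}
      = ((P ×ˢ L).filter (fun z => z.1 ∈ z.2) : Finset _) := by
    ext z
    simp [and_assoc]
  rw [hset, Set.ncard_coe_finset]
  norm_cast
  refine Finset.card_le_card_of_injOn (fun z => (shear t z.1, shear t '' z.2)) ?_ ?_
  · intro z hz
    simp only [Finset.coe_filter, Finset.mem_product, Set.mem_ofPred_eq] at hz ⊢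
    exact ⟨⟨Finset.mem_image_of_mem _ hz.1.1, Finset.mem_image.2 ⟨_, hz.1.2, rfl⟩⟩,
      Set.mem_image_of_mem _ hz.2⟩
  · intro z _ w _ h
    simp only [Prod.mk.injEq] at h
    exact Prod.ext (shear_injective t h.1) (himg h.2)
end

section
/- Let N and r be positive integers with r² ≤ N. Consider the integer grid P = {(x, y) ∈ ℤ² : 0 ≤ x ≤ r−1 and 0 ≤ y < N/r} ⊆ ℝ². Then the lines y = m·x + b with integers 0 ≤ m ≤ ⌊N/(2r²)⌋ − 1 and 0 ≤ b ≤ ⌊N/(2r)⌋ − 1 are pairwise distinct, each contains at least r points of P, and hence P determines at least ⌊N/(2r²)⌋·⌊N/(2r)⌋ lines each containing at least r of its points. -/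
/-- The unbalanced integer grid `{(x, y) ∈ ℤ² : 0 ≤ x ≤ r - 1, 0 ≤ y < N/r} ⊆ ℝ²`. -/
def elekesGrid (N r : ℕ) : Set (ℝ × ℝ) :=
  {p | ∃ x y : ℤ, 0 ≤ x ∧ x ≤ (r : ℤ) - 1 ∧ 0 ≤ y ∧ (y : ℝ) < (N : ℝ) / r ∧
    p = ((x : ℝ), (y : ℝ))}

theorem line_param_injective (m b m' b' : ℤ)
    (h : {p : ℝ × ℝ | p.2 = (m : ℝ) * p.1 + (b : ℝ)} =
      {p : ℝ × ℝ | p.2 = (m' : ℝ) * p.1 + (b' : ℝ)}) : m = m' ∧ b = b' := by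
  have h0 : ((0 : ℝ), (b : ℝ)) ∈ {p : ℝ × ℝ | p.2 = (m' : ℝ) * p.1 + (b' : ℝ)} := by
    rw [← h]; simp
  have h1 : ((1 : ℝ), (m : ℝ) + b) ∈ {p : ℝ × ℝ | p.2 = (m' : ℝ) * p.1 + (b' : ℝ)} := by
    rw [← h]; simp
  simp only [Set.mem_ofPred_eq, mul_zero, zero_add, mul_one] at h0 h1
  have hb : b = b' := by exact_mod_cast h0
  have hm : m + b = m' + b' := by exact_mod_cast h1
  exact ⟨by omega, hb⟩

/-- The two halves `m * x < N/(2r)` and `b < N/(2r)` add up to the height bound of the grid. -/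
theorem height_lt (N r : ℕ) (hr : 0 < r) (m b x : ℤ)
    (hm0 : 0 ≤ m) (hm : m ≤ ((N / (2 * r ^ 2) : ℕ) : ℤ) - 1)
    (hb : b ≤ ((N / (2 * r) : ℕ) : ℤ) - 1) (hx : x ≤ (r : ℤ) - 1) :
    ((m * x + b : ℤ) : ℝ) < (N : ℝ) / r := by
  have hr' : (0 : ℤ) < r := by exact_mod_cast hr
  have e1 : ((2 * r ^ 2 * (N / (2 * r ^ 2)) : ℕ) : ℤ) ≤ N := by
    exact_mod_cast Nat.mul_div_le N (2 * r ^ 2)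
  have e2 : ((2 * r * (N / (2 * r)) : ℕ) : ℤ) ≤ N := by
    exact_mod_cast Nat.mul_div_le N (2 * r)
  rw [Nat.cast_mul] at e1 e2
  generalize ((N / (2 * r ^ 2) : ℕ) : ℤ) = A at *
  generalize ((N / (2 * r) : ℕ) : ℤ) = B at *
  push_cast at e1 e2
  have f1 : 2 * (r : ℤ) ^ 2 * (m + 1) ≤ N :=
    (mul_le_mul_of_nonneg_left (by linarith) (by positivity)).trans e1
  have f2 : 2 * (r : ℤ) * (b + 1) ≤ N :=
    (mul_le_mul_of_nonneg_left (by linarith) (by positivity)).trans e2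
  have f3 : m * x * r ≤ m * r * r :=
    mul_le_mul_of_nonneg_right (mul_le_mul_of_nonneg_left (by linarith) hm0) hr'.le
  have key : (m * x + b) * r < (N : ℤ) := by nlinarith
  rw [lt_div_iff₀ (by exact_mod_cast hr)]
  exact_mod_cast key

/-- Each line of the family meets each of the `r` columns of the grid. The intersection is
identified exactly, as a graph over `0 ≤ x < r`: since `Set.ncard` of an infinite set is `0`,
containing this graph would not be enough. -/
theorem line_rich (N r : ℕ) (hr : 0 < r) (m b : ℤ)
    (hm0 : 0 ≤ m) (hm : m ≤ ((N / (2 * r ^ 2) : ℕ) : ℤ) - 1)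
    (hb0 : 0 ≤ b) (hb : b ≤ ((N / (2 * r) : ℕ) : ℤ) - 1) :
    r ≤ (elekesGrid N r ∩ {p : ℝ × ℝ | p.2 = (m : ℝ) * p.1 + (b : ℝ)}).ncard := by
  have heq : elekesGrid N r ∩ {p : ℝ × ℝ | p.2 = (m : ℝ) * p.1 + (b : ℝ)} =
      (fun x : ℤ => ((x : ℝ), (m : ℝ) * x + b)) '' (Finset.Ico (0 : ℤ) r : Set ℤ) := by
    ext p
    simp only [Set.mem_inter_iff, Set.mem_ofPred_eq, Set.mem_image, Finset.coe_Ico, Set.mem_Ico]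
    constructor
    · rintro ⟨⟨x, y, hx0, hx1, -, -, rfl⟩, hp⟩
      exact ⟨x, ⟨hx0, by omega⟩, Prod.ext rfl hp.symm⟩
    · rintro ⟨x, ⟨hx0, hx1⟩, rfl⟩
      exact ⟨⟨x, m * x + b, hx0, by omega, by positivity,
        height_lt N r hr m b x hm0 hm hb (by omega), by push_cast; rfl⟩, rfl⟩
  rw [heq, Set.ncard_image_of_injective, Set.ncard_coe_finset]
  · simp
  · intro x y hxy
    exact Int.cast_injective (Prod.ext_iff.1 hxy).1

/-- **Elekes' unbalanced grid construction.** Let `N, r` be positive integers with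
`r² ≤ N` and let `P` be the grid `{(x, y) ∈ ℤ² : 0 ≤ x ≤ r-1, 0 ≤ y < N/r}`. The lines
`y = m·x + b` with integers `0 ≤ m ≤ ⌊N/(2r²)⌋ - 1` and `0 ≤ b ≤ ⌊N/(2r)⌋ - 1` are
pairwise distinct, each contains at least `r` points of `P`, and hence `P` determines at
least `⌊N/(2r²)⌋·⌊N/(2r)⌋` lines each containing at least `r` of its points. -/
theorem elekes_construction (N r : ℕ) (hN : 0 < N) (hr : 0 < r) (hrN : r ^ 2 ≤ N) :
    (∀ m b m' b' : ℤ,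
      {p : ℝ × ℝ | p.2 = (m : ℝ) * p.1 + (b : ℝ)} =
        {p : ℝ × ℝ | p.2 = (m' : ℝ) * p.1 + (b' : ℝ)} → m = m' ∧ b = b') ∧
    (∀ m b : ℤ, 0 ≤ m → m ≤ ((N / (2 * r ^ 2) : ℕ) : ℤ) - 1 →
      0 ≤ b → b ≤ ((N / (2 * r) : ℕ) : ℤ) - 1 →
      r ≤ (elekesGrid N r ∩ {p : ℝ × ℝ | p.2 = (m : ℝ) * p.1 + (b : ℝ)}).ncard) ∧
    ∃ S : Finset (Set (ℝ × ℝ)),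
      (∀ L ∈ S, IsLine L ∧ r ≤ (elekesGrid N r ∩ L).ncard) ∧
      (N / (2 * r ^ 2)) * (N / (2 * r)) ≤ S.card := by
  classical
  refine ⟨line_param_injective, line_rich N r hr, ?_⟩
  refine ⟨((Finset.range (N / (2 * r ^ 2))) ×ˢ (Finset.range (N / (2 * r)))).image
    (fun q : ℕ × ℕ => {p : ℝ × ℝ | p.2 = ((q.1 : ℤ) : ℝ) * p.1 + ((q.2 : ℤ) : ℝ)}), ?_, ?_⟩
  · intro L hL
    obtain ⟨⟨m, b⟩, hq, rfl⟩ := Finset.mem_image.1 hL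
    simp only [Finset.mem_product, Finset.mem_range] at hq
    obtain ⟨h1, h2⟩ := hq
    refine ⟨⟨-(m : ℝ), 1, b, by simp, ?_⟩, line_rich N r hr m b (by positivity) ?_
      (by positivity) ?_⟩
    · ext p
      simp only [Set.mem_ofPred_eq, Int.cast_natCast]
      constructor <;> intro h <;> linarith
    · have : (m : ℤ) < ((N / (2 * r ^ 2) : ℕ) : ℤ) := by exact_mod_cast h1
      exact Int.le_sub_one_of_lt this
    · have : (b : ℤ) < ((N / (2 * r) : ℕ) : ℤ) := by exact_mod_cast h2
      exact Int.le_sub_one_of_lt this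
  · rw [Finset.card_image_of_injective, Finset.card_product, Finset.card_range, Finset.card_range]
    intro q q' h
    obtain ⟨h1, h2⟩ := line_param_injective _ _ _ _ h
    exact Prod.ext (by exact_mod_cast h1) (by exact_mod_cast h2)
end

section
/- Let k ≥ 2 be a squarefree integer, so that Λ = (1, √k) is a nice basis of the real quadratic number field K = ℚ(√k) ⊆ ℝ. Then there exist constants c₁, c₂ > 0, depending only on k, such that for all positive integers N and r with r ≤ N^{1/2}, the point set A_r(Λ) × A_{N/r}(Λ) = {(a + b√k, c + d√k) : a, b, c, d ∈ ℤ, |a|, |b| ≤ r^{1/2}/2, |c|, |d| ≤ (N/r)^{1/2}/2} ⊆ ℝ² determines at least c₁·N²/r³ distinct lines in ℝ², each containing at least c₂·r of its points. -/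
/-- The quadratic grid `A_r(Λ) × A_{N/r}(Λ)` for `Λ = (1, √k)`:
`{(a + b√k, c + d√k) : a,b,c,d ∈ ℤ, |a|,|b| ≤ r^{1/2}/2, |c|,|d| ≤ (N/r)^{1/2}/2}`. -/
def quadGrid (k N r : ℕ) : Set (ℝ × ℝ) :=
  {p | ∃ a b c d : ℤ,
    |(a : ℝ)| ≤ Real.sqrt r / 2 ∧ |(b : ℝ)| ≤ Real.sqrt r / 2 ∧
    |(c : ℝ)| ≤ Real.sqrt ((N : ℝ) / r) / 2 ∧ |(d : ℝ)| ≤ Real.sqrt ((N : ℝ) / r) / 2 ∧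
    p = ((a : ℝ) + (b : ℝ) * Real.sqrt k, (c : ℝ) + (d : ℝ) * Real.sqrt k)}

/-- The integers of absolute value at most `y`. -/
noncomputable def intBox (y : ℝ) : Finset ℤ := Finset.Icc (-⌊y⌋) ⌊y⌋

lemma mem_intBox {y : ℝ} {n : ℤ} : n ∈ intBox y ↔ |(n : ℝ)| ≤ y := by
  rw [intBox, Finset.mem_Icc, ← abs_le, Int.le_floor, Int.cast_abs]

lemma le_card_intBox {y : ℝ} (hy : 0 ≤ y) : y ≤ ((intBox y).card : ℝ) := by
  have h0 : 0 ≤ ⌊y⌋ := Int.floor_nonneg.mpr hy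
  have h1 : ((intBox y).card : ℤ) = 2 * ⌊y⌋ + 1 := by
    rw [intBox, Int.card_Icc, Int.toNat_of_nonneg (by omega)]
    ring
  have h2 : ((intBox y).card : ℝ) = 2 * (⌊y⌋ : ℝ) + 1 := by exact_mod_cast h1
  have h3 : (0 : ℝ) ≤ ⌊y⌋ := by exact_mod_cast h0
  linarith [Int.lt_floor_add_one y]

/-- The real number `a + b√k` with coordinates `(a, b)` in the basis `(1, √k)`. -/
noncomputable def quadVal (k : ℕ) (p : ℤ × ℤ) : ℝ := (p.1 : ℝ) + (p.2 : ℝ) * Real.sqrt k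

lemma irrational_sqrt_of_squarefree {k : ℕ} (hk : 2 ≤ k) (hsf : Squarefree k) :
    Irrational (Real.sqrt k) := by
  rw [irrational_sqrt_natCast_iff]
  rintro ⟨m, rfl⟩
  have hm : m = 1 := Nat.isUnit_iff.mp (hsf m dvd_rfl)
  subst hm
  omega

lemma quadVal_injective {k : ℕ} (hirr : Irrational (Real.sqrt k)) :
    Function.Injective (quadVal k) := by
  rintro ⟨a, b⟩ ⟨c, d⟩ h
  simp only [quadVal] at h
  have hbd : b = d := by
    by_contra hne
    have hne' : ((b - d : ℤ) : ℝ) ≠ 0 := by exact_mod_cast sub_ne_zero.mpr hne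
    refine hirr ⟨((c - a : ℤ) : ℚ) / ((b - d : ℤ) : ℚ), ?_⟩
    rw [Rat.cast_div, Rat.cast_intCast, Rat.cast_intCast, div_eq_iff hne']
    push_cast
    linarith
  subst hbd
  have hac : (a : ℝ) = c := by linarith
  rw [Int.cast_injective hac]

/-- The line `y = s x + t`, where the pair `q = (s, t)` is given by coordinates in the
basis `(1, √k)`. -/
def graphLine (k : ℕ) (q : (ℤ × ℤ) × (ℤ × ℤ)) : Set (ℝ × ℝ) :=
  {p | -quadVal k q.1 * p.1 + 1 * p.2 = quadVal k q.2}

lemma isLine_graphLine (k : ℕ) (q : (ℤ × ℤ) × (ℤ × ℤ)) : IsLine (graphLine k q) :=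
  ⟨-quadVal k q.1, 1, quadVal k q.2, by simp, rfl⟩

lemma graphLine_injective {k : ℕ} (hirr : Irrational (Real.sqrt k)) :
    Function.Injective (graphLine k) := by
  rintro ⟨s, t⟩ ⟨s', t'⟩ h
  -- The points of the first line above `x = 0` and `x = 1` lie on the second one.
  have h0 : ((0 : ℝ), quadVal k t) ∈ graphLine k (s', t') := by
    rw [← h]; simp [graphLine]
  have h1 : ((1 : ℝ), quadVal k s + quadVal k t) ∈ graphLine k (s', t') := by
    rw [← h]; simp [graphLine]
  simp only [graphLine, Set.mem_ofPred_eq] at h0 h1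
  have ht : quadVal k t = quadVal k t' := by linarith
  have hs : quadVal k s = quadVal k s' := by linarith
  rw [quadVal_injective hirr hs, quadVal_injective hirr ht]

lemma quadGrid_finite (k N r : ℕ) : (quadGrid k N r).Finite := by
  refine Set.Finite.subset (((intBox (Real.sqrt r / 2) ×ˢ intBox (Real.sqrt r / 2)) ×ˢ
    (intBox (Real.sqrt ((N : ℝ) / r) / 2) ×ˢ
      intBox (Real.sqrt ((N : ℝ) / r) / 2))).finite_toSet.image
      (fun q => (quadVal k q.1, quadVal k q.2))) ?_
  rintro p ⟨a, b, c, d, ha, hb, hc, hd, rfl⟩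
  refine ⟨((a, b), (c, d)), ?_, rfl⟩
  simp only [Finset.mem_coe, Finset.mem_product, mem_intBox]
  exact ⟨⟨ha, hb⟩, hc, hd⟩

/-- The bound on the coordinates of `s x + t`, to be used with `X = √r`, `Y = √(N/r)` and
`Z = √N / r`: `u, v` are the coordinates of `s`, `a, b` those of `x` (in either order), and `w` is
one of `t`. The multipliers `(m, n)` are `(1, k)` for the rational coordinate and `(1, 1)` for the
coefficient of `√k`. -/
lemma coord_bound {k X Y Z u v w a b m n : ℝ} (hk : 0 ≤ k)
    (hm : 0 ≤ m) (hn : 0 ≤ n) (hmn : m + n ≤ k + 1) (hZX : Z * X = Y)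
    (hu : |u| ≤ Z / (2 * (k + 1))) (hv : |v| ≤ Z / (2 * (k + 1)))
    (ha : |a| ≤ X / 2) (hb : |b| ≤ X / 2) (hw : |w| ≤ Y / 4) :
    |m * (u * a) + n * (v * b) + w| ≤ Y / 2 := by
  have hP : ∀ {u a : ℝ}, |u| ≤ Z / (2 * (k + 1)) → |a| ≤ X / 2 →
      |u * a| ≤ Y / (4 * (k + 1)) := by
    intro u a hu ha
    rw [abs_mul]
    calc |u| * |a| ≤ Z / (2 * (k + 1)) * (X / 2) :=
          mul_le_mul hu ha (abs_nonneg a) ((abs_nonneg u).trans hu)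
      _ = Y / (4 * (k + 1)) := by rw [← hZX]; field_simp; ring
  calc |m * (u * a) + n * (v * b) + w|
      ≤ |m * (u * a)| + |n * (v * b)| + |w| := abs_add_three _ _ _
    _ = m * |u * a| + n * |v * b| + |w| := by
        rw [abs_mul m, abs_mul n, abs_of_nonneg hm, abs_of_nonneg hn]
    _ ≤ m * (Y / (4 * (k + 1))) + n * (Y / (4 * (k + 1))) + Y / 4 := by
        gcongr
        · exact hP hu ha
        · exact hP hv hb
    _ = (m + n) * (Y / (4 * (k + 1))) + Y / 4 := by ring
    _ ≤ (k + 1) * (Y / (4 * (k + 1))) + Y / 4 := by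
        gcongr
        exact (abs_nonneg _).trans (hP hu ha)
    _ = Y / 2 := by field_simp; ring

lemma line_points {k N r : ℕ} (hirr : Irrational (Real.sqrt k)) (hr : 0 < r)
    {q : (ℤ × ℤ) × (ℤ × ℤ)}
    (hs₁ : |(q.1.1 : ℝ)| ≤ Real.sqrt N / r / (2 * (k + 1)))
    (hs₂ : |(q.1.2 : ℝ)| ≤ Real.sqrt N / r / (2 * (k + 1)))
    (ht₁ : |(q.2.1 : ℝ)| ≤ Real.sqrt ((N : ℝ) / r) / 4)
    (ht₂ : |(q.2.2 : ℝ)| ≤ Real.sqrt ((N : ℝ) / r) / 4) :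
    1 / 4 * (r : ℝ) ≤ ((quadGrid k N r ∩ graphLine k q).ncard : ℝ) := by
  obtain ⟨⟨s₁, s₂⟩, ⟨t₁, t₂⟩⟩ := q
  simp only at hs₁ hs₂ ht₁ ht₂
  have hr' : (0 : ℝ) < r := by exact_mod_cast hr
  have hX : 0 < Real.sqrt r := Real.sqrt_pos.mpr hr'
  have hk1 : (1 : ℝ) ≤ k := by
    have : k ≠ 0 := by
      rintro rfl
      simp at hirr
    exact_mod_cast Nat.one_le_iff_ne_zero.mpr this
  have hXX : Real.sqrt r * Real.sqrt r = r := Real.mul_self_sqrt hr'.le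
  have hKK : Real.sqrt k * Real.sqrt k = k := Real.mul_self_sqrt (Nat.cast_nonneg k)
  have hZX : Real.sqrt N / r * Real.sqrt r = Real.sqrt ((N : ℝ) / r) := by
    rw [Real.sqrt_div (Nat.cast_nonneg N), div_mul_eq_mul_div, div_eq_div_iff hr'.ne' hX.ne',
      mul_assoc, hXX]
  let B := intBox (Real.sqrt r / 2) ×ˢ intBox (Real.sqrt r / 2)
  let f : ℤ × ℤ → ℝ × ℝ := fun x =>
    (quadVal k x, quadVal k (s₁, s₂) * quadVal k x + quadVal k (t₁, t₂))
  have hf : Function.Injective f := fun x y h =>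
    quadVal_injective hirr (congrArg Prod.fst h)
  have hsub : ((B.image f : Finset (ℝ × ℝ)) : Set (ℝ × ℝ)) ⊆
      quadGrid k N r ∩ graphLine k ((s₁, s₂), (t₁, t₂)) := by
    intro p hp
    simp only [Finset.coe_image, Set.mem_image, Finset.mem_coe] at hp
    obtain ⟨⟨a, b⟩, hab, rfl⟩ := hp
    simp only [B, Finset.mem_product, mem_intBox] at hab
    obtain ⟨ha, hb⟩ := hab
    refine ⟨⟨a, b, s₁ * a + k * (s₂ * b) + t₁, s₁ * b + s₂ * a + t₂, ha, hb, ?_, ?_, ?_⟩, ?_⟩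
    · have := coord_bound (m := 1) (n := k) (Nat.cast_nonneg k) zero_le_one
        (Nat.cast_nonneg k) (add_comm _ _).le hZX hs₁ hs₂ ha hb ht₁
      push_cast
      rwa [one_mul] at this
    · have := coord_bound (m := 1) (n := 1) (Nat.cast_nonneg k) zero_le_one
        zero_le_one (by linarith) hZX hs₁ hs₂ hb ha ht₂
      push_cast
      rwa [one_mul, one_mul] at this
    · simp only [f, quadVal, Prod.mk.injEq, true_and]
      push_cast
      linear_combination (s₂ : ℝ) * b * hKK
    · simp only [f, graphLine, Set.mem_ofPred_eq]
      ring
  have hcard : (B.card : ℝ) ≤ ((quadGrid k N r ∩ graphLine k ((s₁, s₂), (t₁, t₂))).ncard : ℝ) := by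
    rw [← Finset.card_image_of_injective B hf, ← Set.ncard_coe_finset]
    exact_mod_cast Set.ncard_le_ncard hsub ((quadGrid_finite k N r).inter_of_left _)
  refine le_trans ?_ hcard
  have hI := le_card_intBox (y := Real.sqrt r / 2) (by positivity)
  have := mul_le_mul hI hI (by positivity) (by positivity)
  simp only [B, Finset.card_product, Nat.cast_mul]
  linarith

/-- **The quadratic-field instance of the main theorem.** Let `k ≥ 2` be a squarefree
integer. Then there are constants `c₁, c₂ > 0`, depending only on `k`, such that for all
positive integers `N, r` with `r ≤ N^{1/2}`, the point set
`{(a + b√k, c + d√k) : |a|,|b| ≤ r^{1/2}/2, |c|,|d| ≤ (N/r)^{1/2}/2} ⊆ ℝ²` determines at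
least `c₁·N²/r³` distinct lines in `ℝ²`, each containing at least `c₂·r` of its
points. -/
theorem quadratic_field_construction (k : ℕ) (hk : 2 ≤ k) (hsf : Squarefree k) :
    ∃ c₁ c₂ : ℝ, 0 < c₁ ∧ 0 < c₂ ∧
      ∀ N r : ℕ, 0 < N → 0 < r → (r : ℝ) ≤ Real.sqrt N →
        ∃ S : Finset (Set (ℝ × ℝ)),
          (∀ L ∈ S, IsLine L ∧ c₂ * r ≤ ((quadGrid k N r) ∩ L).ncard) ∧
          c₁ * (N : ℝ) ^ 2 / (r : ℝ) ^ 3 ≤ S.card := by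
  classical
  have hirr := irrational_sqrt_of_squarefree hk hsf
  refine ⟨1 / (64 * ((k : ℝ) + 1) ^ 2), 1 / 4, by positivity, by norm_num, ?_⟩
  intro N r _ hr _
  have hr' : (0 : ℝ) < r := by exact_mod_cast hr
  let I := intBox (Real.sqrt N / r / (2 * (k + 1)))
  let J := intBox (Real.sqrt ((N : ℝ) / r) / 4)
  refine ⟨((I ×ˢ I) ×ˢ (J ×ˢ J)).image (graphLine k), ?_, ?_⟩
  · intro L hL
    obtain ⟨q, hq, rfl⟩ := Finset.mem_image.mp hL
    simp only [I, J, Finset.mem_product, mem_intBox] at hq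
    exact ⟨isLine_graphLine k q, line_points hirr hr hq.1.1 hq.1.2 hq.2.1 hq.2.2⟩
  · rw [Finset.card_image_of_injective _ (graphLine_injective hirr)]
    simp only [Finset.card_product, Nat.cast_mul]
    have hI : _ ≤ (I.card : ℝ) := le_card_intBox (by positivity)
    have hJ : _ ≤ (J.card : ℝ) := le_card_intBox (by positivity)
    have hN : Real.sqrt N ^ 2 = N := Real.sq_sqrt (Nat.cast_nonneg N)
    have hNr : Real.sqrt ((N : ℝ) / r) ^ 2 = N / r := Real.sq_sqrt (by positivity)
    calc 1 / (64 * ((k : ℝ) + 1) ^ 2) * (N : ℝ) ^ 2 / (r : ℝ) ^ 3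
        = (Real.sqrt N ^ 2 / r ^ 2 / (4 * (k + 1) ^ 2)) * (Real.sqrt ((N : ℝ) / r) ^ 2 / 16) := by
          rw [hN, hNr]; field_simp; norm_num
      _ = (Real.sqrt N / r / (2 * (k + 1)) * (Real.sqrt N / r / (2 * (k + 1)))) *
          (Real.sqrt ((N : ℝ) / r) / 4 * (Real.sqrt ((N : ℝ) / r) / 4)) := by
          field_simp; norm_num
      _ ≤ (I.card * I.card : ℝ) * (J.card * J.card) := by gcongr
end
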